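/- arXiv:math/0004056 — 2 statements merged into one kernel-verified Lean document; each statement's English description precedes it below -/
import Mathlib

section
/- Let n = p + q be odd. Then the complexified Clifford algebra ℂ_n = ℂ ⊗_ℝ Cl_{p,q} decomposes into a direct sum of two subalgebras: for all p', q' ≥ 0 with p' + q' = n − 1 there is a ℂ-algebra isomorphism ℂ ⊗_ℝ Cl_{p,q} ≅ (ℂ ⊗_ℝ Cl_{p',q'}) × (ℂ ⊗_ℝ Cl_{p',q'}). -/
open CliffordAlgebra
open scoped TensorProduct

/-- The standard quadratic form of signature `(p,q)` on `ℝ^{p+q}`: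
`Q(x) = x₁² + ⋯ + x_p² − x_{p+1}² − ⋯ − x_{p+q}²`. -/
noncomputable def Qpq (p q : ℕ) : QuadraticForm ℝ (Fin (p+q) → ℝ) :=
  QuadraticMap.weightedSumSquares ℝ (fun i : Fin (p+q) => if (i : ℕ) < p then (1 : ℝ) else -1)

/-- The real Clifford algebra `Cl_{p,q}`. -/
abbrev Cl (p q : ℕ) : Type := CliffordAlgebra (Qpq p q)

/-- The generators `e₁, …, e_{p+q}` of `Cl_{p,q}` (here `0`-indexed). -/
noncomputable def e (p q : ℕ) (i : Fin (p+q)) : Cl p q :=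
  CliffordAlgebra.ι (Qpq p q) (Pi.single i 1)

/-!
In odd dimension the product `z` of an orthogonal basis is an odd central element of `Cl(Q)`. If
`Q` is nondegenerate over an algebraically closed field, `z` can be rescaled so that `z² = 1`. The
central idempotents `(1 ± z)/2` then split `Cl(Q) = Cl⁺(Q) ⊕ Cl⁺(Q) z` into two copies of the even
subalgebra `Cl⁺(Q)`. Nondegenerate forms of equal rank over such a field are isometric, so `Q` may
be taken to be `Q₀ - x²` for any nondegenerate `Q₀` on a space of one dimension less, and
`Cl⁺(Q₀ - x²) ≅ Cl(Q₀)`.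
-/

section Anticommute

variable {A : Type*} [Ring A]

theorem mul_list_prod_of_anticommute {a : A} {l : List A} (h : ∀ x ∈ l, a * x = -(x * a)) :
    a * l.prod = (-1 : ℤ) ^ l.length • (l.prod * a) := by
  induction l with
  | nil => simp
  | cons x l ih =>
    obtain ⟨hx, hl⟩ := List.forall_mem_cons.mp h
    rw [List.prod_cons, ← mul_assoc, hx, neg_mul, mul_assoc, ih hl, mul_smul_comm, ← mul_assoc,
      List.length_cons, pow_succ', neg_one_mul, neg_smul]

theorem mul_list_prod_of_mem_of_pairwise_anticommute {a : A} {l : List A}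
    (h : l.Pairwise fun x y => x * y = -(y * x)) (ha : a ∈ l) :
    a * l.prod = (-1 : ℤ) ^ (l.length + 1) • (l.prod * a) := by
  induction l with
  | nil => simp at ha
  | cons x l ih =>
    obtain ⟨hx, hl⟩ := List.pairwise_cons.mp h
    rcases List.mem_cons.mp ha with rfl | hal
    · calc a * (a :: l).prod
          = a * ((-1 : ℤ) ^ l.length • (l.prod * a)) := by
            rw [List.prod_cons, mul_list_prod_of_anticommute hx]
        _ = (-1 : ℤ) ^ ((a :: l).length + 1) • ((a :: l).prod * a) := by
            rw [mul_smul_comm, ← mul_assoc, List.length_cons, add_assoc, one_add_one_eq_two,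
              pow_add, neg_one_sq, mul_one, List.prod_cons]
    · have anticommute : a * x = -(x * a) := by rw [hx a hal, neg_neg]
      rw [List.prod_cons, ← mul_assoc, anticommute, neg_mul, mul_assoc, ih hl hal, mul_smul_comm,
        ← mul_assoc, List.length_cons, pow_succ' _ (l.length + 1), neg_one_mul, neg_smul]

theorem list_prod_mul_self_of_pairwise_anticommute {l : List A}
    (h : l.Pairwise fun x y => x * y = -(y * x)) :
    l.prod * l.prod = (-1 : ℤ) ^ l.length.choose 2 • (l.map fun x => x * x).prod := by
  induction l with
  | nil => simp
  | cons x l ih =>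
    obtain ⟨hx, hl⟩ := List.pairwise_cons.mp h
    have hcomm : l.prod * x = (-1 : ℤ) ^ l.length • (x * l.prod) := by
      rw [mul_list_prod_of_anticommute hx, smul_smul, ← mul_pow, neg_one_mul, neg_neg, one_pow,
        one_smul]
    calc (x :: l).prod * (x :: l).prod
        = x * (l.prod * x) * l.prod := by simp only [List.prod_cons, mul_assoc]
      _ = (-1 : ℤ) ^ l.length • (x * x * (l.prod * l.prod)) := by
          simp only [hcomm, mul_smul_comm, smul_mul_assoc, mul_assoc]
      _ = (-1 : ℤ) ^ (x :: l).length.choose 2 • ((x :: l).map fun x => x * x).prod := by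
          rw [ih hl, mul_smul_comm, smul_smul, ← pow_add, List.length_cons,
            Nat.choose_succ_succ' _ 1, Nat.choose_one_right, List.map_cons, List.prod_cons]

end Anticommute

section VolumeElement

variable {R M : Type*} [CommRing R] [AddCommGroup M] [Module R M]

/-- The volume element `v₀ v₁ ⋯ vₙ₋₁` of a finite family of vectors, used for orthogonal bases;
the factors are multiplied in the order of `Fin n`. -/
def volumeElement (Q : QuadraticForm R M) {n : ℕ} (v : Fin n → M) : CliffordAlgebra Q :=
  (List.ofFn fun i => ι Q (v i)).prod

variable {Q : QuadraticForm R M} {n : ℕ}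

theorem volumeElement_mem_evenOdd (v : Fin n → M) :
    volumeElement Q v ∈ evenOdd Q (n : ZMod 2) := by
  simpa [volumeElement] using
    SetLike.list_prod_ofFn_mem_graded (A := evenOdd Q) (fun _ : Fin n => 1) _
      fun i => ι_mem_evenOdd_one Q (v i)

theorem pairwise_anticommute_ofFn_ι {v : Fin n → M} (hv : Pairwise (Q.IsOrtho.onFun v)) :
    (List.ofFn fun i => ι Q (v i)).Pairwise fun x y => x * y = -(y * x) :=
  List.pairwise_ofFn.mpr fun _ _ hij => ι_mul_ι_comm_of_isOrtho (hv hij.ne)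

theorem volumeElement_mul_self {v : Fin n → M} (hv : Pairwise (Q.IsOrtho.onFun v)) :
    volumeElement Q v * volumeElement Q v =
      algebraMap R _ ((-1) ^ n.choose 2 * ∏ i, Q (v i)) := by
  rw [volumeElement, list_prod_mul_self_of_pairwise_anticommute (pairwise_anticommute_ofFn_ι hv),
    List.map_ofFn, List.length_ofFn, map_mul, ← List.prod_ofFn, map_list_prod, List.map_ofFn]
  simp [Function.comp_def]

theorem volumeElement_mem_center (b : Module.Basis (Fin n) R M)
    (hb : Pairwise (Q.IsOrtho.onFun b)) (hn : Odd n) :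
    volumeElement Q b ∈ Subalgebra.center R (CliffordAlgebra Q) := by
  have commute_basis (i : Fin n) : Commute (ι Q (b i)) (volumeElement Q b) := by
    have h := mul_list_prod_of_mem_of_pairwise_anticommute (pairwise_anticommute_ofFn_ι hb)
      (List.mem_ofFn.mpr ⟨i, rfl⟩)
    rwa [List.length_ofFn, hn.add_one.neg_one_pow, one_smul] at h
  have commute_ι (m : M) : Commute (ι Q m) (volumeElement Q b) := by
    rw [← b.sum_repr m, map_sum]
    exact Commute.sum_left _ _ _ fun i _ => by
      rw [map_smul]
      exact (commute_basis i).smul_left _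
  refine Subalgebra.mem_center_iff.mpr fun x => ?_
  induction x using CliffordAlgebra.induction with
  | algebraMap r => exact Algebra.commutes r _
  | ι m => exact commute_ι m
  | mul x y hx hy => exact Commute.mul_left hx hy
  | add x y hx hy => exact Commute.add_left hx hy

end VolumeElement

section Half

variable {R M : Type*} [Ring R] [Invertible (2 : R)] [AddCommGroup M] [Module R M]

theorem half_smul_add_add_sub (x y : M) : ⅟(2 : R) • (x + y + (x - y)) = x := by
  rw [add_add_sub_cancel, smul_add, invOf_two_smul_add_invOf_two_smul]

theorem half_smul_add_sub_sub (x y : M) : ⅟(2 : R) • (x + y - (x - y)) = y := by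
  rw [add_sub_sub_cancel, smul_add, invOf_two_smul_add_invOf_two_smul]

end Half

section CentralInvolution

variable {R A : Type*} [CommRing R] [Ring A] [Algebra R A]

/-- A central idempotent `e` glues two algebra homomorphisms into `A` to one on the product,
`(b, c) ↦ f b * e + g c * (1 - e)`. -/
def prodHomOfCentralIdempotent {B C : Type*} [Semiring B] [Semiring C] [Algebra R B] [Algebra R C]
    (f : B →ₐ[R] A) (g : C →ₐ[R] A) {e : A} (he : IsIdempotentElem e)
    (hc : e ∈ Subalgebra.center R A) : B × C →ₐ[R] A :=
  AlgHom.ofLinearMap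
    ((LinearMap.mulRight R e ∘ₗ f.toLinearMap).coprod
      (LinearMap.mulRight R (1 - e) ∘ₗ g.toLinearMap))
    (by simp)
    (by
      rintro ⟨b, c⟩ ⟨b', c'⟩
      have mul_mul_of_central {u : A} (hu : u ∈ Subalgebra.center R A) (x y w : A) :
          x * u * (y * w) = x * y * (u * w) :=
        Commute.mul_mul_mul_comm (Subalgebra.mem_center_iff.mp hu y).symm x w
      have hc' : 1 - e ∈ Subalgebra.center R A := sub_mem (one_mem _) hc
      change f (b * b') * e + g (c * c') * (1 - e)
        = (f b * e + g c * (1 - e)) * (f b' * e + g c' * (1 - e))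
      rw [add_mul, mul_add, mul_add, mul_mul_of_central hc, mul_mul_of_central hc,
        mul_mul_of_central hc', mul_mul_of_central hc', he.eq, he.one_sub.eq,
        he.mul_one_sub_self, he.one_sub_mul_self, mul_zero, mul_zero, add_zero, zero_add,
        map_mul, map_mul])

theorem prodHomOfCentralIdempotent_apply {B C : Type*} [Semiring B] [Semiring C] [Algebra R B]
    [Algebra R C] (f : B →ₐ[R] A) (g : C →ₐ[R] A) {e : A} (he : IsIdempotentElem e)
    (hc : e ∈ Subalgebra.center R A) (x : B × C) :
    prodHomOfCentralIdempotent f g he hc x = f x.1 * e + g x.2 * (1 - e) :=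
  rfl

variable [Invertible (2 : R)]

theorem isIdempotentElem_half_one_add {z : A} (hz : z * z = 1) :
    IsIdempotentElem (⅟(2 : R) • (1 + z)) := by
  have square : (1 + z) * (1 + z) = (2 : R) • (1 + z) := by
    rw [mul_add, add_mul, add_mul, hz, two_smul]
    noncomm_ring
  rw [IsIdempotentElem, smul_mul_smul_comm, square, smul_smul, invOf_mul_cancel_right]

theorem mul_half_one_add_add_mul_one_sub (b c z : A) :
    b * (⅟(2 : R) • (1 + z)) + c * (1 - ⅟(2 : R) • (1 + z))
      = ⅟(2 : R) • (b + c) + (⅟(2 : R) • (b - c)) * z := by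
  calc b * (⅟(2 : R) • (1 + z)) + c * (1 - ⅟(2 : R) • (1 + z))
      = ⅟(2 : R) • (b * (1 + z)) + (⅟(2 : R) • (c + c) - ⅟(2 : R) • (c * (1 + z))) := by
        rw [mul_sub, mul_one, mul_smul_comm, mul_smul_comm, smul_add _ c c,
          invOf_two_smul_add_invOf_two_smul]
    _ = ⅟(2 : R) • (b + c) + (⅟(2 : R) • (b - c)) * z := by
        rw [smul_mul_assoc, ← smul_sub, ← smul_add, ← smul_add]
        noncomm_ring

theorem nonempty_algEquiv_prod_of_isCompl_map_mulRight (E : Subalgebra R A) {z : A}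
    (hc : z ∈ Subalgebra.center R A) (hz : z * z = 1)
    (h : IsCompl E.toSubmodule (E.toSubmodule.map (LinearMap.mulRight R z))) :
    Nonempty (A ≃ₐ[R] E × E) := by
  have idem := isIdempotentElem_half_one_add (R := R) hz
  have central : ⅟(2 : R) • (1 + z) ∈ Subalgebra.center R A :=
    Subalgebra.smul_mem _ (add_mem (one_mem _) hc) _
  let φ : E × E →ₐ[R] A := prodHomOfCentralIdempotent E.val E.val idem central
  have φ_apply (x : E × E) :
      φ x = ⅟(2 : R) • (x.1 + x.2 : A) + (⅟(2 : R) • (x.1 - x.2 : A)) * z :=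
    (prodHomOfCentralIdempotent_apply _ _ idem central x).trans
      (mul_half_one_add_add_mul_one_sub _ _ _)
  refine ⟨(AlgEquiv.ofBijective φ ⟨(injective_iff_map_eq_zero φ).mpr ?_, fun a => ?_⟩).symm⟩
  · rintro ⟨b, c⟩ hbc
    rw [φ_apply] at hbc
    have half_sum_mem : ⅟(2 : R) • (b + c : A) ∈ E := E.smul_mem (E.add_mem b.2 c.2) _
    have half_diff_mem : ⅟(2 : R) • (b - c : A) ∈ E := E.smul_mem (E.sub_mem b.2 c.2) _
    obtain ⟨half_sum, half_diff_mul⟩ := Submodule.disjoint_iff_add_eq_zero.mp h.disjoint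
      half_sum_mem ⟨_, half_diff_mem, rfl⟩ hbc
    have half_diff : ⅟(2 : R) • (b - c : A) = 0 := by
      rw [← mul_one (⅟(2 : R) • _), ← hz, ← mul_assoc]
      exact mul_eq_zero_of_left half_diff_mul z
    ext
    · calc (b : A) = ⅟(2 : R) • (b + c : A) + ⅟(2 : R) • (b - c : A) := by
            rw [← smul_add, half_smul_add_add_sub]
        _ = 0 := by rw [half_sum, half_diff, add_zero]
    · calc (c : A) = ⅟(2 : R) • (b + c : A) - ⅟(2 : R) • (b - c : A) := by
            rw [← smul_sub, half_smul_add_sub_sub]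
        _ = 0 := by rw [half_sum, half_diff, sub_zero]
  · obtain ⟨x, hx, y, hy, rfl⟩ : ∃ x ∈ E, ∃ y ∈ E, x + y * z = a := by
      obtain ⟨x, hx, _, ⟨y, hy, rfl⟩, hxy⟩ :=
        Submodule.mem_sup.mp (h.sup_eq_top ▸ Submodule.mem_top : a ∈ _)
      exact ⟨x, hx, y, hy, hxy⟩
    refine ⟨⟨⟨x + y, E.add_mem hx hy⟩, ⟨x - y, E.sub_mem hx hy⟩⟩, ?_⟩
    rw [φ_apply, half_smul_add_add_sub, half_smul_add_sub_sub]

end CentralInvolution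

section EvenSubalgebra

variable {R M : Type*} [CommRing R] [AddCommGroup M] [Module R M] {Q : QuadraticForm R M}

theorem evenOdd_one_eq_map_mulRight {z : CliffordAlgebra Q} (hodd : z ∈ evenOdd Q 1)
    (hz : z * z = 1) : evenOdd Q 1 = (evenOdd Q 0).map (LinearMap.mulRight R z) := by
  have mul_z_mem {i j : ZMod 2} (hij : i + 1 = j) {x : CliffordAlgebra Q}
      (hx : x ∈ evenOdd Q i) : x * z ∈ evenOdd Q j := hij ▸ SetLike.mul_mem_graded hx hodd
  apply le_antisymm
  · exact fun x hx => ⟨x * z, mul_z_mem (CharTwo.add_self_eq_zero 1) hx, by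
      rw [LinearMap.mulRight_apply, mul_assoc, hz, mul_one]⟩
  · rintro _ ⟨x, hx, rfl⟩
    exact mul_z_mem (zero_add 1) hx

theorem nonempty_algEquiv_even_prod_even_of_odd_central_involution [Invertible (2 : R)]
    {z : CliffordAlgebra Q} (hodd : z ∈ evenOdd Q 1)
    (hc : z ∈ Subalgebra.center R (CliffordAlgebra Q)) (hz : z * z = 1) :
    Nonempty (CliffordAlgebra Q ≃ₐ[R] even Q × even Q) := by
  have compl := evenOdd_isCompl Q
  rw [evenOdd_one_eq_map_mulRight hodd hz] at compl
  exact nonempty_algEquiv_prod_of_isCompl_map_mulRight (even Q) hc hz compl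

end EvenSubalgebra

section Nondegenerate

theorem nondegenerate_equivEven_Q' {R M : Type*} [CommRing R] [AddCommGroup M] [Module R M]
    [Invertible (2 : R)] {Q : QuadraticForm R M} (hQ : Q.Nondegenerate) :
    (EquivEven.Q' Q).Nondegenerate := by
  rw [QuadraticMap.nondegenerate_iff_radical_eq_bot, eq_bot_iff]
  rintro ⟨m, r⟩ hmr
  obtain ⟨apply_eq_zero, apply_add⟩ := QuadraticMap.mem_radical_iff'.mp hmr
  simp only [EquivEven.Q'_apply, Prod.forall, Prod.fst_add, Prod.snd_add]
    at apply_eq_zero apply_add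
  have r_zero : r = 0 := by
    have h := apply_add 0 1
    rw [add_zero, map_zero] at h
    have two_mul_r : 2 * r = 0 := by linear_combination apply_eq_zero - h
    exact (isUnit_of_invertible (2 : R)).mul_right_eq_zero.mp two_mul_r
  subst r_zero
  have m_mem : m ∈ Q.radical := QuadraticMap.mem_radical_iff'.mpr
    ⟨by simpa using apply_eq_zero, fun n => by simpa using apply_add n 0⟩
  rw [hQ.radical_eq_bot, Submodule.mem_bot] at m_mem
  rw [m_mem]
  exact Submodule.zero_mem _

variable {K V : Type*} [Field K] [Invertible (2 : K)] [AddCommGroup V] [Module K V]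
  {Q : QuadraticForm K V}

theorem nondegenerate_iff_of_pairwise_isOrtho {ι : Type*}
    (b : Module.Basis ι K V) (hb : Pairwise (Q.IsOrtho.onFun b)) :
    Q.Nondegenerate ↔ ∀ i, Q (b i) ≠ 0 := by
  have h_ortho : (QuadraticMap.associated Q).IsOrthoᵢ b := fun i j hij =>
    QuadraticMap.associated_isOrtho.mpr (hb hij)
  rw [← QuadraticMap.nondegenerate_associated_iff]
  constructor
  · intro h i
    rw [← QuadraticMap.associated_eq_self_apply K]
    exact h_ortho.not_isOrtho_basis_self_of_separatingLeft h.1 i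
  · intro h
    exact h_ortho.nondegenerate_of_not_isOrtho_basis_self b fun i => by
      change QuadraticMap.associated Q (b i) (b i) ≠ 0
      rw [QuadraticMap.associated_eq_self_apply]
      exact h i

theorem exists_basis_pairwise_isOrtho [FiniteDimensional K V] (Q : QuadraticForm K V) :
    ∃ b : Module.Basis (Fin (Module.finrank K V)) K V, Pairwise (Q.IsOrtho.onFun b) := by
  obtain ⟨b, hb⟩ :=
    LinearMap.BilinForm.exists_orthogonal_basis (QuadraticForm.associated_isSymm K Q)
  exact ⟨b, fun i j hij => QuadraticMap.associated_isOrtho.mp (hb hij)⟩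

theorem nondegenerate_baseChange [FiniteDimensional K V] (L : Type*) [Field L] [Algebra K L]
    [Invertible (2 : L)] (hQ : Q.Nondegenerate) : (Q.baseChange L).Nondegenerate := by
  obtain ⟨b, hb⟩ := exists_basis_pairwise_isOrtho Q
  have ortho_baseChange : Pairwise ((Q.baseChange L).IsOrtho.onFun (b.baseChange L)) := by
    intro i j hij
    rw [Function.onFun, Module.Basis.baseChange_apply, Module.Basis.baseChange_apply,
      QuadraticMap.isOrtho_def, ← TensorProduct.tmul_add, QuadraticForm.baseChange_tmul,
      QuadraticForm.baseChange_tmul, QuadraticForm.baseChange_tmul, (hb hij : _ = _), add_smul]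
  rw [nondegenerate_iff_of_pairwise_isOrtho _ ortho_baseChange]
  intro i
  rw [Module.Basis.baseChange_apply, QuadraticForm.baseChange_tmul]
  simpa using (nondegenerate_iff_of_pairwise_isOrtho b hb).mp hQ i

theorem nondegenerate_weightedSumSquares {ι : Type*} [Fintype ι] {w : ι → K}
    (hw : ∀ i, w i ≠ 0) : (QuadraticMap.weightedSumSquares K w).Nondegenerate := by
  rw [QuadraticMap.nondegenerate_iff_radical_eq_bot, QuadraticForm.radical_weightedSumSquares]
  ext v
  simp [Pi.mem_spanSubset_iff, hw, funext_iff]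

theorem nondegenerate_Qpq (p q : ℕ) : (Qpq p q).Nondegenerate :=
  nondegenerate_weightedSumSquares fun i => by split_ifs <;> norm_num

end Nondegenerate

section AlgClosed

variable {K V V' : Type*} [Field K] [IsAlgClosed K] [Invertible (2 : K)]
  [AddCommGroup V] [Module K V] [FiniteDimensional K V]
  [AddCommGroup V'] [Module K V'] [FiniteDimensional K V']
  {Q : QuadraticForm K V} {Q' : QuadraticForm K V'}

theorem exists_odd_central_involution (hQ : Q.Nondegenerate) (hodd : Odd (Module.finrank K V)) :
    ∃ z ∈ evenOdd Q 1, z ∈ Subalgebra.center K (CliffordAlgebra Q) ∧ z * z = 1 := by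
  obtain ⟨b, hb⟩ := exists_basis_pairwise_isOrtho Q
  have hb_ne := (nondegenerate_iff_of_pairwise_isOrtho b hb).mp hQ
  obtain ⟨d, hd, sq_eq⟩ :
      ∃ d : K, d ≠ 0 ∧ volumeElement Q b * volumeElement Q b = algebraMap K _ d :=
    ⟨_, mul_ne_zero (pow_ne_zero _ (neg_ne_zero.mpr one_ne_zero))
      (Finset.prod_ne_zero_iff.mpr fun i _ => hb_ne i), volumeElement_mul_self hb⟩
  obtain ⟨c, hc⟩ := IsAlgClosed.exists_eq_mul_self d⁻¹
  have mem_odd : volumeElement Q b ∈ evenOdd Q 1 :=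
    ZMod.natCast_eq_one_iff_odd.mpr hodd ▸ volumeElement_mem_evenOdd b
  refine ⟨c • volumeElement Q b, Submodule.smul_mem _ _ mem_odd,
    Subalgebra.smul_mem _ (volumeElement_mem_center b hb hodd) _, ?_⟩
  rw [smul_mul_smul_comm, sq_eq, ← hc, Algebra.smul_def, ← map_mul, inv_mul_cancel₀ hd, map_one]

theorem equivalent_of_isAlgClosed_of_finrank_eq (hQ : Q.Nondegenerate) (hQ' : Q'.Nondegenerate)
    (h : Module.finrank K V = Module.finrank K V') : Q.Equivalent Q' := by
  have sumSquares := Q.equivalent_weightedSumSquares_of_isAlgClosed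
    (QuadraticMap.nondegenerate_associated_iff.mpr hQ).1
  rw [h] at sumSquares
  exact sumSquares.trans (Q'.equivalent_weightedSumSquares_of_isAlgClosed
    (QuadraticMap.nondegenerate_associated_iff.mpr hQ').1).symm

theorem nonempty_algEquiv_prod_of_odd_finrank (hQ : Q.Nondegenerate) (hQ' : Q'.Nondegenerate)
    (hodd : Odd (Module.finrank K V)) (h : Module.finrank K V' + 1 = Module.finrank K V) :
    Nonempty (CliffordAlgebra Q ≃ₐ[K] CliffordAlgebra Q' × CliffordAlgebra Q') := by
  have finrank_aug : Module.finrank K (V' × K) = Module.finrank K V := by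
    rw [Module.finrank_prod, Module.finrank_self, h]
  have nondeg_aug := nondegenerate_equivEven_Q' hQ'
  obtain ⟨z, z_odd, z_central, z_sq⟩ :=
    exists_odd_central_involution nondeg_aug (finrank_aug ▸ hodd)
  obtain ⟨splitting⟩ :=
    nonempty_algEquiv_even_prod_even_of_odd_central_involution z_odd z_central z_sq
  obtain ⟨isometry⟩ := equivalent_of_isAlgClosed_of_finrank_eq hQ nondeg_aug finrank_aug.symm
  exact ⟨(equivOfIsometry isometry).trans
    (splitting.trans ((equivEven Q').symm.prodCongr (equivEven Q').symm))⟩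

end AlgClosed

theorem complexified_cl_odd_decomposition_general {k V V' : Type*} (K : Type*) [Field k] [Field K]
    [Algebra k K] [IsAlgClosed K] [Invertible (2 : k)]
    [AddCommGroup V] [Module k V] [FiniteDimensional k V]
    [AddCommGroup V'] [Module k V'] [FiniteDimensional k V']
    {Q : QuadraticForm k V} {Q' : QuadraticForm k V'} (hQ : Q.Nondegenerate)
    (hQ' : Q'.Nondegenerate) (hodd : Odd (Module.finrank k V))
    (h : Module.finrank k V' + 1 = Module.finrank k V) :
    Nonempty ((K ⊗[k] CliffordAlgebra Q) ≃ₐ[K]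
      ((K ⊗[k] CliffordAlgebra Q') × (K ⊗[k] CliffordAlgebra Q'))) := by
  let : Invertible (2 : K) := (Invertible.map (algebraMap k K) 2).copy 2 (map_ofNat _ 2).symm
  obtain ⟨f⟩ := nonempty_algEquiv_prod_of_odd_finrank
    (nondegenerate_baseChange K hQ) (nondegenerate_baseChange K hQ')
    (by rwa [Module.finrank_baseChange])
    (by rwa [Module.finrank_baseChange, Module.finrank_baseChange])
  exact ⟨(equivBaseChange K Q).symm.trans
    (f.trans ((equivBaseChange K Q').prodCongr (equivBaseChange K Q')))⟩

/-- For `n = p + q` odd, the complexified Clifford algebra `ℂ_n = ℂ ⊗_ℝ Cl_{p,q}`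
decomposes into a direct sum of two subalgebras: for all `p', q'` with `p' + q' = n − 1`
there is a `ℂ`-algebra isomorphism
`ℂ ⊗_ℝ Cl_{p,q} ≅ (ℂ ⊗_ℝ Cl_{p',q'}) × (ℂ ⊗_ℝ Cl_{p',q'})`. -/
theorem complexified_cl_odd_decomposition (p q : ℕ) (hodd : Odd (p + q))
    (p' q' : ℕ) (h' : p' + q' = p + q - 1) :
    Nonempty ((ℂ ⊗[ℝ] Cl p q) ≃ₐ[ℂ] ((ℂ ⊗[ℝ] Cl p' q') × (ℂ ⊗[ℝ] Cl p' q'))) :=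
  complexified_cl_odd_decomposition_general ℂ (nondegenerate_Qpq p q) (nondegenerate_Qpq p' q')
    (by simpa using hodd) (by simpa [h'] using Nat.sub_add_cancel hodd.pos)
end

section
/- In the Majorana algebra Cl_{3,1} (with e₁² = e₂² = e₃² = 1 and e₄² = −1), set e₃₁ = (1/2)(1 + e₁)·(1/2)(1 + e₂e₄). Then e₃₁ is an idempotent, e₁·e₃₁ = e₃₁, and the left ideal Cl_{3,1} · e₃₁ coincides with Cl⁺_{3,1} · e₃₁, where Cl⁺_{3,1} is the even subalgebra. -/
open CliffordAlgebra
open scoped TensorProduct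

/-!
Every vector of a Clifford algebra is odd. If an odd element `u` satisfies `u * f = f` and
`x = x₀ + x₁` with `x₀` even and `x₁` odd, then `x * f = x₀ * f + x₁ * (u * f) = (x₀ + x₁ * u) * f`,
where `x₀ + x₁ * u` is even. When `u² = 1`, the idempotent `½(1 + u)`, and hence each of its right
multiples, is such an `f`.

A vector orthogonal to `v` and `w` anticommutes with both, hence commutes with `v * w`; the two
idempotents therefore commute, and their product is idempotent.
-/

theorem mul_one_add_of_mul_self_eq_one {A : Type*} [NonAssocSemiring A] {a : A}
    (ha : a * a = 1) : a * (1 + a) = 1 + a := by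
  rw [mul_add, mul_one, ha, add_comm]

theorem isIdempotentElem_invOf_two_smul_one_add {R A : Type*} [CommSemiring R] [Invertible (2 : R)]
    [Semiring A] [Algebra R A] {a : A} (ha : a * a = 1) :
    IsIdempotentElem (⅟(2 : R) • (1 + a)) := by
  have one_add_sq : (1 + a) * (1 + a) = (2 : R) • (1 + a) := by
    rw [add_mul, one_mul, mul_one_add_of_mul_self_eq_one ha, two_smul]
  rw [IsIdempotentElem, smul_mul_smul_comm, one_add_sq, smul_smul, mul_assoc, invOf_mul_self,
    mul_one]

theorem range_mul_right_eq_image_graded_zero {A σ : Type*} [Semiring A] [SetLike σ A]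
    [AddSubmonoidClass σ A] (𝒜 : ZMod 2 → σ) [GradedRing 𝒜] {u f : A} (hu : u ∈ 𝒜 1)
    (huf : u * f = f) :
    (Set.range fun x : A => x * f) = (fun y : A => y * f) '' (𝒜 0 : Set A) := by
  refine Set.Subset.antisymm ?_ (Set.image_subset_range _ _)
  rintro _ ⟨x, rfl⟩
  obtain ⟨x₀, hx₀, x₁, hx₁, rfl⟩ : ∃ x₀ ∈ 𝒜 0, ∃ x₁ ∈ 𝒜 1, x₀ + x₁ = x := by
    have sum_eq : ∑ i, (DirectSum.decompose 𝒜 x i : A) = x := by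
      simp only [← DirectSum.decompose_symm_of 𝒜, ← DirectSum.decompose_symm_sum,
        DirectSum.sum_univ_of, Equiv.symm_apply_apply]
    exact ⟨_, SetLike.coe_mem _, _, SetLike.coe_mem _, (Fin.sum_univ_two _).symm.trans sum_eq⟩
  have even_mem : x₀ + x₁ * u ∈ 𝒜 0 := add_mem hx₀ (SetLike.mul_mem_graded hx₁ hu)
  exact ⟨x₀ + x₁ * u, even_mem, by simp only [add_mul, mul_assoc, huf]⟩

section Clifford

variable {R M : Type*} [CommRing R] [AddCommGroup M] [Module R M] {Q : QuadraticForm R M}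
  {u v w : M}

theorem commute_ι_ι_mul_ι_of_isOrtho (huv : Q.IsOrtho u v) (huw : Q.IsOrtho u w) :
    Commute (ι Q u) (ι Q v * ι Q w) := by
  rw [commute_iff_eq, ι_mul_ι_mul_of_isOrtho _ huv, ι_mul_ι_comm_of_isOrtho huw, mul_neg, neg_neg,
    mul_assoc]

theorem ι_mul_ι_mul_self_of_isOrtho (hvw : Q.IsOrtho v w) :
    ι Q v * ι Q w * (ι Q v * ι Q w) = algebraMap R _ (-(Q v * Q w)) := by
  rw [mul_ι_mul_ι_mul_comm_of_isOrtho _ hvw.symm, ι_sq_scalar, ι_sq_scalar, map_neg, map_mul]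

theorem majorana_idempotent_even_reduction_general [Invertible (2 : R)] (hQu : Q u = 1)
    (hQvw : Q v * Q w = -1) (huv : Q.IsOrtho u v) (huw : Q.IsOrtho u w) (hvw : Q.IsOrtho v w)
    {f : CliffordAlgebra Q}
    (hf : f = (⅟(2 : R) • (1 + ι Q u)) * (⅟(2 : R) • (1 + ι Q v * ι Q w))) :
    IsIdempotentElem f ∧
    ι Q u * f = f ∧
    (Set.range fun x : CliffordAlgebra Q => x * f) =
      ((fun y : CliffordAlgebra Q => y * f) '' (even Q : Set (CliffordAlgebra Q))) := by
  have u_sq : ι Q u * ι Q u = 1 := by rw [ι_sq_scalar, hQu, map_one]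
  have vw_sq : ι Q v * ι Q w * (ι Q v * ι Q w) = 1 := by
    rw [ι_mul_ι_mul_self_of_isOrtho hvw, hQvw, neg_neg, map_one]
  have factors_commute :
      Commute (⅟(2 : R) • (1 + ι Q u)) (⅟(2 : R) • (1 + ι Q v * ι Q w)) :=
    (((Commute.one_right _).add_right <| (Commute.one_left _).add_left <|
      commute_ι_ι_mul_ι_of_isOrtho huv huw).smul_left _).smul_right _
  have u_mul_f : ι Q u * f = f := by
    rw [hf, ← mul_assoc, mul_smul_comm _ (ι Q u), mul_one_add_of_mul_self_eq_one u_sq]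
  refine ⟨?_, u_mul_f, range_mul_right_eq_image_graded_zero (evenOdd Q) (ι_mem_evenOdd_one Q u)
    u_mul_f⟩
  rw [hf]
  exact (isIdempotentElem_invOf_two_smul_one_add u_sq).mul_of_commute factors_commute
    (isIdempotentElem_invOf_two_smul_one_add vw_sq)

end Clifford

section WeightedSumSquares

variable {ι R S : Type*} [Fintype ι] [DecidableEq ι] [CommSemiring R] [Monoid S]
  [DistribMulAction S R] [SMulCommClass S R R] (w : ι → S)

theorem weightedSumSquares_single (i : ι) (r : R) :
    QuadraticMap.weightedSumSquares R w (Pi.single i r) = w i • (r * r) := by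
  rw [QuadraticMap.weightedSumSquares_apply, Fintype.sum_eq_single i]
  · rw [Pi.single_eq_same]
  · intro j hj
    rw [Pi.single_eq_of_ne hj, mul_zero, smul_zero]

theorem isOrtho_weightedSumSquares_single {i j : ι} (hij : i ≠ j) (r s : R) :
    (QuadraticMap.weightedSumSquares R w).IsOrtho (Pi.single i r) (Pi.single j s) := by
  simp only [QuadraticMap.isOrtho_def, QuadraticMap.weightedSumSquares_apply,
    ← Finset.sum_add_distrib]
  refine Finset.sum_congr rfl fun k _ => ?_
  obtain rfl | hki := eq_or_ne k i
  · simp [hij]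
  · simp [hki]

end WeightedSumSquares

theorem Qpq_single (p q : ℕ) (i : Fin (p + q)) :
    Qpq p q (Pi.single i 1) = if (i : ℕ) < p then 1 else -1 := by
  rw [Qpq, weightedSumSquares_single, mul_one, smul_eq_mul, mul_one]

theorem isOrtho_Qpq_single {p q : ℕ} {i j : Fin (p + q)} (hij : i ≠ j) :
    (Qpq p q).IsOrtho (Pi.single i 1) (Pi.single j 1) :=
  isOrtho_weightedSumSquares_single _ hij 1 1

/-- In the Majorana algebra `Cl_{3,1}` (with `e₁² = e₂² = e₃² = 1`, `e₄² = −1`;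
generators `0`-indexed, so `e₁ = e 3 1 0`, `e₂e₄ = e 3 1 1 * e 3 1 3`), the element
`e₃₁ = ½(1 + e₁) · ½(1 + e₂e₄)` is an idempotent, `e₁ · e₃₁ = e₃₁`, and the left ideal
`Cl_{3,1} · e₃₁` coincides with `Cl⁺_{3,1} · e₃₁`, where `Cl⁺_{3,1}` is the even
subalgebra. -/
theorem majorana_idempotent_even_reduction
    (e₃₁ : Cl 3 1)
    (he : e₃₁ = ((2 : ℝ)⁻¹ • (1 + e 3 1 0)) * ((2 : ℝ)⁻¹ • (1 + e 3 1 1 * e 3 1 3))) :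
    IsIdempotentElem e₃₁ ∧
    e 3 1 0 * e₃₁ = e₃₁ ∧
    (Set.range fun x : Cl 3 1 => x * e₃₁) =
      ((fun y : Cl 3 1 => y * e₃₁) '' (CliffordAlgebra.even (Qpq 3 1) : Set (Cl 3 1))) :=
  majorana_idempotent_even_reduction_general
    (u := Pi.single 0 1) (v := Pi.single 1 1) (w := Pi.single 3 1)
    (by rw [Qpq_single]; simp) (by rw [Qpq_single, Qpq_single]; simp)
    (isOrtho_Qpq_single (by decide)) (isOrtho_Qpq_single (by decide))
    (isOrtho_Qpq_single (by decide)) (by rwa [invOf_eq_inv])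
end
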